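/- (Hadamard case, ψ(t) = ln t) Let 0 < a < b. Suppose q: (a,b) → ℝ is measurable with ∫_a^b |q(τ)|/τ dτ < ∞, κ ∈ (0,1), and |𝒢(x)| ≤ κ·‖x‖ for all x ∈ C([a,b],ℝ). If there exists a nontrivial continuous function x: [a,b] → ℝ satisfying x(t) = (ln(t/a)/ln(b/a))^β·𝒢(x) + ∫_a^b G(τ,t)·(q(τ)/τ)·x(τ) dτ for all t ∈ [a,b], then ∫_a^b |q(τ)|/τ dτ ≥ (1−κ)·Γ(α+β)/(ln(b/a))^{α+β−1}. -/

import Mathlib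

open MeasureTheory Set

/-- The Green function in the Hadamard case `ψ(t) = ln t`. -/
noncomputable def G (a b α β : ℝ) (τ t : ℝ) : ℝ :=
  if τ ≤ t then
    (Real.log (t / a)) ^ β * (Real.log (b / τ)) ^ (α + β - 1) /
        (Real.Gamma (α + β) * (Real.log (b / a)) ^ β) -
      (Real.log (t / τ)) ^ (α + β - 1) / Real.Gamma (α + β)
  else
    (Real.log (t / a)) ^ β * (Real.log (b / τ)) ^ (α + β - 1) /
      (Real.Gamma (α + β) * (Real.log (b / a)) ^ β)

/-- The supremum norm of a function over the interval `[a,b]`. -/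
noncomputable def supNorm (a b : ℝ) (x : ℝ → ℝ) : ℝ :=
  ⨆ t : Set.Icc a b, |x ↑t|

/-! With `k(τ, t) = ln(t/τ)^(γ-1) / Γ(γ)` the Hadamard kernel of order `γ = α + β` and
`ρ(t) = (ln(t/a) / ln(b/a))^β`, the Green function is `ρ(t) k(τ, b) - 1_{τ ≤ t} k(τ, t)`. Since
`0 ≤ ρ ≤ 1` and `0 ≤ k ≤ k(a, b)`, it is a difference of two numbers in `[0, k(a, b)]`, so
`|G| ≤ k(a, b)`. Taking the supremum over `t` in the integral equation gives
`‖x‖ ≤ (κ + k(a, b) ∫ |q(τ)|/τ dτ) ‖x‖`, and `‖x‖ > 0` can be cancelled. -/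

section SupNorm

variable {a b t C : ℝ} {x : ℝ → ℝ}

theorem abs_le_supNorm (hx : ContinuousOn x (Icc a b)) (ht : t ∈ Icc a b) :
    |x t| ≤ supNorm a b x := by
  have hbdd : BddAbove (range fun s : Icc a b => |x s|) := by
    simpa only [image_eq_range] using isCompact_Icc.bddAbove_image hx.abs
  exact le_ciSup hbdd ⟨t, ht⟩

theorem supNorm_pos (hx : ContinuousOn x (Icc a b)) (hne : ∃ t ∈ Icc a b, x t ≠ 0) :
    0 < supNorm a b x := by
  obtain ⟨t, ht, hxt⟩ := hne
  exact (abs_pos.2 hxt).trans_le (abs_le_supNorm hx ht)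

theorem supNorm_le (hab : a ≤ b) (hC : ∀ t ∈ Icc a b, |x t| ≤ C) : supNorm a b x ≤ C :=
  have : Nonempty (Icc a b) := ⟨⟨a, left_mem_Icc.2 hab⟩⟩
  ciSup_le fun t => hC t t.2

end SupNorm

section IntegralEquation

variable {a b M κ c : ℝ} {w x : ℝ → ℝ}

theorem abs_integral_mul_mul_le_mul_supNorm {k : ℝ → ℝ} (hab : a ≤ b)
    (hk : ∀ τ ∈ Icc a b, |k τ| ≤ M) (hw : IntervalIntegrable w volume a b)
    (hx : ContinuousOn x (Icc a b)) :
    |∫ τ in a..b, k τ * w τ * x τ| ≤ M * (∫ τ in a..b, |w τ|) * supNorm a b x := by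
  have hM : 0 ≤ M := (abs_nonneg _).trans (hk a (left_mem_Icc.2 hab))
  have hpointwise : ∀ τ ∈ Ioc a b, ‖k τ * w τ * x τ‖ ≤ M * |w τ| * supNorm a b x := by
    intro τ hτ
    have hτ' := Ioc_subset_Icc_self hτ
    rw [Real.norm_eq_abs, abs_mul, abs_mul]
    gcongr
    exacts [hk τ hτ', abs_le_supNorm hx hτ']
  calc |∫ τ in a..b, k τ * w τ * x τ|
      ≤ ∫ τ in a..b, M * |w τ| * supNorm a b x :=
        intervalIntegral.norm_integral_le_of_norm_le hab (.of_forall hpointwise)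
          ((hw.abs.const_mul M).mul_const _)
    _ = M * (∫ τ in a..b, |w τ|) * supNorm a b x := by
        rw [intervalIntegral.integral_mul_const, intervalIntegral.integral_const_mul]

theorem one_sub_le_mul_integral_abs_of_eq_add_integral {K : ℝ → ℝ → ℝ} {ρ : ℝ → ℝ} (hab : a ≤ b)
    (hρ : ∀ t ∈ Icc a b, |ρ t| ≤ 1) (hc : |c| ≤ κ * supNorm a b x)
    (hK : ∀ τ ∈ Icc a b, ∀ t ∈ Icc a b, |K τ t| ≤ M)
    (hw : IntervalIntegrable w volume a b)
    (hx : ContinuousOn x (Icc a b)) (hne : ∃ t ∈ Icc a b, x t ≠ 0)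
    (heq : ∀ t ∈ Icc a b, x t = ρ t * c + ∫ τ in a..b, K τ t * w τ * x τ) :
    1 - κ ≤ M * ∫ τ in a..b, |w τ| := by
  have hbound : supNorm a b x ≤ (κ + M * ∫ τ in a..b, |w τ|) * supNorm a b x := by
    refine supNorm_le hab fun t ht => ?_
    calc |x t| ≤ |ρ t * c| + |∫ τ in a..b, K τ t * w τ * x τ| := by
          rw [heq t ht]
          exact abs_add_le _ _
      _ ≤ κ * supNorm a b x + M * (∫ τ in a..b, |w τ|) * supNorm a b x := by
          gcongr
          · rw [abs_mul]
            exact (mul_le_of_le_one_left (abs_nonneg c) (hρ t ht)).trans hc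
          · exact abs_integral_mul_mul_le_mul_supNorm hab (fun τ hτ => hK τ hτ t ht) hw hx
      _ = (κ + M * ∫ τ in a..b, |w τ|) * supNorm a b x := by ring
  have hone : 1 ≤ κ + M * ∫ τ in a..b, |w τ| :=
    (le_mul_iff_one_le_left (supNorm_pos hx hne)).1 hbound
  linarith

end IntegralEquation

section GreenFunction

variable {a b α β γ s t τ : ℝ}

theorem log_div_nonneg_of_le (hs : 0 < s) (hst : s ≤ t) : 0 ≤ Real.log (t / s) :=
  Real.log_nonneg ((one_le_div hs).2 hst)

theorem log_div_le_log_div (ha : 0 < a) (has : a ≤ s) (hst : s ≤ t) (htb : t ≤ b) :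
    Real.log (t / s) ≤ Real.log (b / a) := by
  have hs : 0 < s := ha.trans_le has
  have ht : 0 < t := hs.trans_le hst
  exact Real.log_le_log (div_pos ht hs) (div_le_div₀ (ht.le.trans htb) htb ha has)

/-- The kernel of the Hadamard fractional integral of order `γ`, without the factor `1 / τ` of the
measure `dτ / τ`. It is meaningful for `0 < τ ≤ t`. -/
noncomputable def hadamardKernel (γ τ t : ℝ) : ℝ :=
  Real.log (t / τ) ^ (γ - 1) / Real.Gamma γ

theorem hadamardKernel_nonneg (hγ : 0 ≤ γ) (hτ : 0 < τ) (hτt : τ ≤ t) :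
    0 ≤ hadamardKernel γ τ t :=
  div_nonneg (Real.rpow_nonneg (log_div_nonneg_of_le hτ hτt) _) (Real.Gamma_nonneg_of_nonneg hγ)

theorem hadamardKernel_pos (hγ : 0 < γ) (hτ : 0 < τ) (hτt : τ < t) :
    0 < hadamardKernel γ τ t :=
  div_pos (Real.rpow_pos_of_pos (Real.log_pos ((one_lt_div hτ).2 hτt)) _)
    (Real.Gamma_pos_of_pos hγ)

theorem hadamardKernel_le_hadamardKernel (hγ : 1 ≤ γ) (ha : 0 < a) (haτ : a ≤ τ) (hτt : τ ≤ t)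
    (htb : t ≤ b) : hadamardKernel γ τ t ≤ hadamardKernel γ a b :=
  div_le_div_of_nonneg_right
    (Real.rpow_le_rpow (log_div_nonneg_of_le (ha.trans_le haτ) hτt)
      (log_div_le_log_div ha haτ hτt htb) (sub_nonneg.2 hγ))
    (Real.Gamma_nonneg_of_nonneg (zero_le_one.trans hγ))

/-- The coefficient of the nonlocal term `𝒢 x` in the integral equation. It is meaningful for
`t ∈ [a, b]`, where the base lies in `[0, 1]`. -/
noncomputable def boundaryWeight (a b β t : ℝ) : ℝ :=
  (Real.log (t / a) / Real.log (b / a)) ^ β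

theorem boundaryWeight_nonneg (ha : 0 < a) (ht : t ∈ Icc a b) : 0 ≤ boundaryWeight a b β t :=
  Real.rpow_nonneg (div_nonneg (log_div_nonneg_of_le ha ht.1)
    (log_div_nonneg_of_le ha (ht.1.trans ht.2))) β

theorem boundaryWeight_le_one (ha : 0 < a) (hβ : 0 ≤ β) (ht : t ∈ Icc a b) :
    boundaryWeight a b β t ≤ 1 := by
  have hta := log_div_nonneg_of_le ha ht.1
  have hba := log_div_nonneg_of_le ha (ht.1.trans ht.2)
  exact Real.rpow_le_one (div_nonneg hta hba)
    (div_le_one_of_le₀ (log_div_le_log_div ha le_rfl ht.1 ht.2) hba) hβ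

theorem abs_boundaryWeight_le_one (ha : 0 < a) (hβ : 0 ≤ β) (ht : t ∈ Icc a b) :
    |boundaryWeight a b β t| ≤ 1 :=
  (abs_of_nonneg (boundaryWeight_nonneg ha ht)).trans_le (boundaryWeight_le_one ha hβ ht)

theorem G_eq_boundaryWeight_mul_sub (ha : 0 < a) (ht : t ∈ Icc a b) :
    G a b α β τ t = boundaryWeight a b β t * hadamardKernel (α + β) τ b -
      if τ ≤ t then hadamardKernel (α + β) τ t else 0 := by
  have hρ : boundaryWeight a b β t = Real.log (t / a) ^ β / Real.log (b / a) ^ β :=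
    Real.div_rpow (log_div_nonneg_of_le ha ht.1) (log_div_nonneg_of_le ha (ht.1.trans ht.2)) β
  simp only [G, hρ, hadamardKernel, div_mul_div_comm, mul_comm (Real.Gamma (α + β))]
  split_ifs <;> simp only [sub_zero]

theorem abs_G_le (ha : 0 < a) (hβ : 0 ≤ β) (hαβ : 1 ≤ α + β) (hτ : τ ∈ Icc a b)
    (ht : t ∈ Icc a b) : |G a b α β τ t| ≤ hadamardKernel (α + β) a b := by
  have hγ : 0 ≤ α + β := zero_le_one.trans hαβ
  have hτ0 : 0 < τ := ha.trans_le hτ.1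
  have hτb : 0 ≤ hadamardKernel (α + β) τ b := hadamardKernel_nonneg hγ hτ0 hτ.2
  rw [G_eq_boundaryWeight_mul_sub ha ht]
  apply abs_sub_le_of_nonneg_of_le
  · exact mul_nonneg (boundaryWeight_nonneg ha ht) hτb
  · exact (mul_le_of_le_one_left hτb (boundaryWeight_le_one ha hβ ht)).trans
      (hadamardKernel_le_hadamardKernel hαβ ha hτ.1 hτ.2 le_rfl)
  · split_ifs with hτt
    exacts [hadamardKernel_nonneg hγ hτ0 hτt, le_rfl]
  · split_ifs with hτt
    exacts [hadamardKernel_le_hadamardKernel hαβ ha hτ.1 hτt ht.2,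
      hadamardKernel_nonneg hγ ha (hτ.1.trans hτ.2)]

end GreenFunction

section Lyapunov

variable {a b : ℝ} {q : ℝ → ℝ}

theorem eqOn_abs_div_id (ha : 0 < a) :
    EqOn (fun τ => |q τ / τ|) (fun τ => |q τ| / τ) (Icc a b) := fun τ hτ => by
  simp only [abs_div, abs_of_pos (ha.trans_le hτ.1)]

theorem intervalIntegrable_div_id (ha : 0 < a) (hab : a ≤ b)
    (hq_meas : AEStronglyMeasurable q (volume.restrict (Ioo a b)))
    (hq : IntervalIntegrable (fun τ => |q τ| / τ) volume a b) :
    IntervalIntegrable (fun τ => q τ / τ) volume a b := by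
  rw [intervalIntegrable_iff_integrableOn_Ioo_of_le hab] at hq ⊢
  have hmeas : AEStronglyMeasurable (fun τ => q τ / τ) (volume.restrict (Ioo a b)) :=
    (hq_meas.aemeasurable.div aemeasurable_id).aestronglyMeasurable
  refine (integrable_norm_iff hmeas).1 (hq.congr_fun ?_ measurableSet_Ioo)
  exact ((eqOn_abs_div_id ha).mono Ioo_subset_Icc_self).symm

/-- Here `c` stands for `𝒢 x`. -/
theorem lyapunov_hadamard_general {α β κ c : ℝ} {x : ℝ → ℝ}
    (ha : 0 < a) (hab : a < b) (hβ : 0 ≤ β) (hαβ : 1 ≤ α + β)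
    (hq : IntervalIntegrable (fun τ => q τ / τ) volume a b)
    (hc : |c| ≤ κ * supNorm a b x)
    (hx : ContinuousOn x (Icc a b)) (hne : ∃ t ∈ Icc a b, x t ≠ 0)
    (hmild : ∀ t ∈ Icc a b,
      x t = (Real.log (t / a) / Real.log (b / a)) ^ β * c +
        ∫ τ in a..b, G a b α β τ t * (q τ / τ) * x τ) :
    (1 - κ) * Real.Gamma (α + β) / Real.log (b / a) ^ (α + β - 1) ≤
      ∫ τ in a..b, |q τ| / τ := by
  have hk : 0 < hadamardKernel (α + β) a b := hadamardKernel_pos (by linarith) ha hab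
  have hweight : ∫ τ in a..b, |q τ / τ| = ∫ τ in a..b, |q τ| / τ :=
    intervalIntegral.integral_congr (uIcc_of_le hab.le ▸ eqOn_abs_div_id ha)
  have hineq : 1 - κ ≤ hadamardKernel (α + β) a b * ∫ τ in a..b, |q τ / τ| :=
    one_sub_le_mul_integral_abs_of_eq_add_integral hab.le
      (fun _ ht => abs_boundaryWeight_le_one ha hβ ht) hc
      (fun _ hτ _ ht => abs_G_le ha hβ hαβ hτ ht) hq hx hne hmild
  calc (1 - κ) * Real.Gamma (α + β) / Real.log (b / a) ^ (α + β - 1)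
      = (1 - κ) / hadamardKernel (α + β) a b := (div_div_eq_mul_div _ _ _).symm
    _ ≤ ∫ τ in a..b, |q τ / τ| := (div_le_iff₀' hk).2 hineq
    _ = ∫ τ in a..b, |q τ| / τ := hweight

end Lyapunov

theorem lyapunov_hadamard
    (a b α β κ : ℝ) (ha : 0 < a) (hab : a < b)
    (hα0 : 0 < α) (hα1 : α ≤ 1) (hβ0 : 0 < β) (hβ1 : β ≤ 1) (hαβ : 1 < α + β)
    (q : ℝ → ℝ) (𝒢 : (ℝ → ℝ) → ℝ)
    (hq_meas : AEStronglyMeasurable q (volume.restrict (Set.Ioo a b)))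
    (hq : IntervalIntegrable (fun τ => |q τ| / τ) volume a b)
    (hκ0 : 0 < κ) (hκ1 : κ < 1)
    (h𝒢 : ∀ x : ℝ → ℝ, ContinuousOn x (Set.Icc a b) → |𝒢 x| ≤ κ * supNorm a b x)
    (x : ℝ → ℝ) (hx_cont : ContinuousOn x (Set.Icc a b))
    (hx_nontrivial : ∃ t ∈ Set.Icc a b, x t ≠ 0)
    (hmild : ∀ t ∈ Set.Icc a b,
      x t = (Real.log (t / a) / Real.log (b / a)) ^ β * 𝒢 x +
        ∫ τ in a..b, G a b α β τ t * (q τ / τ) * x τ) :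
    ∫ τ in a..b, |q τ| / τ ≥
      (1 - κ) * Real.Gamma (α + β) / (Real.log (b / a)) ^ (α + β - 1) :=
  lyapunov_hadamard_general ha hab hβ0.le hαβ.le
    (intervalIntegrable_div_id ha hab.le hq_meas hq) (h𝒢 x hx_cont) hx_cont hx_nontrivial hmild
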